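/- arXiv:2604.26101 — 2 statements merged into one kernel-verified Lean document; each statement's English description precedes it below -/
import Mathlib

section
/- Let G be a 2-regular digraph on a finite vertex type V with n elements, and let λ(G) = |{v ∈ V : G v v}| be the number of loops of G. Then 2·∑_{σ ∈ C(G)} fix(σ) = λ(G)·|C(G)|, where fix(σ) = |{v ∈ V : σ v = v}|; in particular, since λ(G) ≤ n, the expected number of fixed points of a uniformly random cycle-factor of G is λ(G)/2 ≤ n/2. -/
/-!
In a 2-regular digraph, the edges not used by a cycle-factor `σ` form again a cycle-factor `τ`
(`exists_complement`): every vertex retains exactly one out-edge and one in-edge. Complementation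
is an involution on the cycle-factors, and each loop of `G` lies in exactly one of `σ`, `τ`, so
`fix σ + fix τ` is the number of loops. Summing over all `σ` counts every fixed point twice.
-/

/-- The number of cycles of a permutation of a finite type, where fixed
points count as cycles of length one. -/
def cycleCount {V : Type*} [Fintype V] [DecidableEq V] (σ : Equiv.Perm V) : ℕ :=
  σ.cycleType.card + (Finset.univ.filter fun x => σ x = x).card

/-- The finite set of cycle-factors of a digraph `G` on `V`. -/
def cycleFactors {V : Type*} [Fintype V] [DecidableEq V] (G : V → V → Prop) [DecidableRel G] :
    Finset (Equiv.Perm V) :=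
  Finset.univ.filter fun σ => ∀ v, G v (σ v)

/-- A digraph is `d`-regular if every vertex has exactly `d` out-neighbours
and exactly `d` in-neighbours. -/
def IsRegularDigraph {V : Type*} [Fintype V] (G : V → V → Prop) [DecidableRel G] (d : ℕ) : Prop :=
  ∀ v, (Finset.univ.filter fun w => G v w).card = d ∧
    (Finset.univ.filter fun w => G w v).card = d
/-- The number of fixed points of a permutation. -/
def fixCount {V : Type*} [Fintype V] [DecidableEq V] (σ : Equiv.Perm V) : ℕ :=
  (Finset.univ.filter fun x => σ x = x).card

/-- Every cycle-factor `σ` has a complementary one `τ`: at each vertex the two out-edges are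
the one used by `σ` and the one used by `τ`. -/
theorem exists_complement {V : Type*} [Fintype V] [DecidableEq V] (G : V → V → Prop)
    [DecidableRel G] (hreg : IsRegularDigraph G 2) (σ : Equiv.Perm V) (hσ : ∀ v, G v (σ v)) :
    ∃ τ : Equiv.Perm V, ∀ v, σ v ≠ τ v ∧ ∀ w, G v w ↔ w = σ v ∨ w = τ v := by
  have hout : ∀ v, ∃ u, σ v ≠ u ∧ ∀ w, G v w ↔ w = σ v ∨ w = u := by
    intro v
    obtain ⟨a, b, hab, hs⟩ := Finset.card_eq_two.mp (hreg v).1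
    have hmem : ∀ w, G v w ↔ w = a ∨ w = b := by
      intro w
      simpa using Finset.ext_iff.mp hs w
    rcases (hmem _).mp (hσ v) with h | h
    · exact ⟨b, by rw [h]; exact hab, by rw [h]; exact hmem⟩
    · exact ⟨a, by rw [h]; exact hab.symm, fun w => by rw [h, hmem, or_comm]⟩
  choose f hne hf using hout
  have hinj : Function.Injective f := by
    intro v w hvw
    by_contra hn
    -- If `f v = f w`, then `v`, `w` and `σ⁻¹ (f v)` are three distinct in-neighbours of `f v`.
    have hcard := (hreg (f v)).2
    have hsub : ({v, w, σ.symm (f v)} : Finset V) ⊆ Finset.univ.filter fun x => G x (f v) := by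
      intro x hx
      simp only [Finset.mem_insert, Finset.mem_singleton] at hx
      simp only [Finset.mem_filter, Finset.mem_univ, true_and]
      rcases hx with rfl | rfl | rfl
      · exact (hf _ _).mpr (Or.inr rfl)
      · exact (hf _ _).mpr (Or.inr hvw)
      · simpa using hσ (σ.symm (f v))
    have hv : v ≠ σ.symm (f v) := fun h => hne v ((Equiv.eq_symm_apply σ).mp h)
    have hw : w ≠ σ.symm (f v) := fun h => hne w (((Equiv.eq_symm_apply σ).mp h).trans hvw)
    have hle := Finset.card_le_card hsub
    rw [hcard, Finset.card_eq_three.mpr ⟨v, w, _, hn, hv, hw, rfl⟩] at hle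
    omega
  exact ⟨Equiv.ofBijective f (Finite.injective_iff_bijective.mp hinj), fun v => ⟨hne v, hf v⟩⟩

theorem stmt_2 {V : Type*} [Fintype V] [DecidableEq V] (G : V → V → Prop) [DecidableRel G]
    (hreg : IsRegularDigraph G 2) :
    2 * ∑ σ ∈ cycleFactors G, fixCount σ =
        (Finset.univ.filter fun v => G v v).card * (cycleFactors G).card ∧
      (Finset.univ.filter fun v => G v v).card ≤ Fintype.card V := by
  refine ⟨?_, Finset.card_le_univ _⟩
  have hC : ∀ σ : Equiv.Perm V, σ ∈ cycleFactors G ↔ ∀ v, G v (σ v) := by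
    simp [cycleFactors]
  choose! c hc using exists_complement G hreg
  have hcC : ∀ σ ∈ cycleFactors G, c σ ∈ cycleFactors G := fun σ hσ =>
    (hC _).mpr fun v => ((hc σ ((hC σ).mp hσ) v).2 _).mpr (Or.inr rfl)
  have hcc : ∀ σ ∈ cycleFactors G, c (c σ) = σ := by
    intro σ hσ
    ext v
    have h1 := hc σ ((hC σ).mp hσ) v
    have h2 := hc (c σ) ((hC _).mp (hcC σ hσ)) v
    exact (((h2.2 _).mp ((hC σ).mp hσ v)).resolve_left h1.1).symm
  have hsum : ∑ σ ∈ cycleFactors G, fixCount (c σ) = ∑ σ ∈ cycleFactors G, fixCount σ :=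
    Finset.sum_nbij' c c hcC hcC hcc hcc fun _ _ => rfl
  have hfix : ∀ σ ∈ cycleFactors G,
      fixCount σ + fixCount (c σ) = (Finset.univ.filter fun v => G v v).card := by
    intro σ hσ
    have h := hc σ ((hC σ).mp hσ)
    unfold fixCount
    rw [← Finset.card_union_of_disjoint]
    · congr 1
      ext v
      simp [(h v).2, eq_comm]
    · refine Finset.disjoint_filter.mpr fun v _ h1 h2 => (h v).1 (h1.trans h2.symm)
  calc 2 * ∑ σ ∈ cycleFactors G, fixCount σ
      = ∑ σ ∈ cycleFactors G, (fixCount σ + fixCount (c σ)) := by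
        rw [Finset.sum_add_distrib, hsum, two_mul]
    _ = _ := by
        rw [Finset.sum_congr rfl hfix, Finset.sum_const, smul_eq_mul, mul_comm]
end

section
/- Let d ≥ 2, let V be a finite type with d elements, and let a, b ∈ V be distinct. Then ∑_{π} c(π) = d!·H_d − 2·(d − 1)!·H_{d−1} + (d − 2)!·(H_{d−2} + 1), as rational numbers, where the sum is over all permutations π of V with π a ≠ b and π b ≠ a. -/
/-- The harmonic number `H m = ∑_{j=1}^m 1/j`. -/
def harm (m : ℕ) : ℚ := ∑ j ∈ Finset.range m, (1 : ℚ) / (j + 1)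

open Equiv Equiv.Perm

/-- Inserting the fixed point `a` into a cycle just before a point `b` of its support gives a
cycle. -/
lemma isCycle_swap_mul {V : Type*} [Fintype V] [DecidableEq V] {c : Perm V} {a b : V}
    (hc : c.IsCycle) (ha : c a = a) (hb : c b ≠ b) : (swap a b * c).IsCycle := by
  have hab : a ≠ b := by rintro rfl; exact hb ha
  have hga : (swap a b * c) a = b := by simp [ha]
  have key : ∀ n : ℕ, (swap a b * c).SameCycle b ((c ^ n) b) := by
    intro n
    induction n with
    | zero => exact SameCycle.refl _ _
    | succ n ih =>
      by_cases h : (c ^ (n + 1)) b = b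
      · rw [h]
      · have hne : (c ^ (n + 1)) b ≠ a := by
          intro h'
          have h1 : (c ^ (n + 1)) a = a := pow_apply_eq_self_of_apply_eq_self ha _
          exact hab ((c ^ (n + 1)).injective (h1.trans h'.symm))
        have : (swap a b * c) ((c ^ n) b) = (c ^ (n + 1)) b := by
          rw [mul_apply, ← mul_apply c, ← pow_succ', swap_apply_of_ne_of_ne hne h]
        rw [← this]
        exact sameCycle_apply_right.2 ih
  refine ⟨b, ?_, fun y hy => ?_⟩
  · intro h
    exact hab ((swap a b * c).injective (hga.trans h.symm))
  · by_cases hya : y = a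
    · subst hya
      exact sameCycle_apply_right.1 (by rw [hga])
    · have hcy : c y ≠ y := by
        intro h
        have hyb : y ≠ b := by rintro rfl; exact hb h
        exact hy (by rw [mul_apply, h, swap_apply_of_ne_of_ne hya hyb])
      obtain ⟨n, rfl⟩ := hc.exists_pow_eq hb hcy
      exact key n

/-- Joining a fixed point `a` to the cycle of another point `b` lowers the number of cycles by
one. -/
lemma cycleCount_swap_mul {V : Type*} [Fintype V] [DecidableEq V] {σ : Perm V} {a b : V}
    (hab : a ≠ b) (ha : σ a = a) : cycleCount (swap a b * σ) + 1 = cycleCount σ := by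
  unfold cycleCount
  by_cases hb : σ b = b
  · -- Two fixed points merge into the new 2-cycle `swap a b`, disjoint from `σ`.
    have hd : Disjoint (swap a b) σ := by
      intro x
      by_cases hxa : x = a
      · right; rw [hxa, ha]
      by_cases hxb : x = b
      · right; rw [hxb, hb]
      left; exact swap_apply_of_ne_of_ne hxa hxb
    have hf : (Finset.univ.filter fun x => (swap a b * σ) x = x) =
        ((Finset.univ.filter fun x => σ x = x).erase a).erase b := by
      ext x
      simp only [Finset.mem_filter, Finset.mem_univ, true_and, Finset.mem_erase, mul_apply]
      by_cases hxa : x = a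
      · subst hxa; simp [ha, hab.symm]
      by_cases hxb : x = b
      · subst hxb; simp [hb, hab]
      rw [swap_apply_eq_iff, swap_apply_of_ne_of_ne hxa hxb]
      simp [hxa, hxb]
    have h1 := Finset.card_erase_add_one (s := Finset.univ.filter fun x => σ x = x) (a := a)
      (by simp [ha])
    have h2 := Finset.card_erase_add_one
      (s := (Finset.univ.filter fun x => σ x = x).erase a) (a := b) (by simp [hb, hab.symm])
    rw [hd.cycleType_mul, (isCycle_swap hab).cycleType, hf, Multiset.card_add,
      Multiset.card_singleton]
    omega
  · -- The cycle `σ.cycleOf b` absorbs `a`; the remaining cycles `r` are untouched.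
    have hca : σ.cycleOf b a = a := by
      by_cases h : σ.SameCycle b a
      · rw [h.cycleOf_apply, ha]
      · exact cycleOf_apply_of_not_sameCycle h
    have hcb : σ.cycleOf b b ≠ b := by rwa [cycleOf_apply_self]
    have hcyc : (σ.cycleOf b).IsCycle := isCycle_cycleOf σ hb
    have hdis := disjoint_mul_inv_of_mem_cycleFactorsFinset
      (cycleOf_mem_cycleFactorsFinset_iff.2 (mem_support.2 hb))
    generalize σ.cycleOf b = c at hca hcb hcyc hdis
    obtain ⟨r, hr⟩ : ∃ r, r = σ * c⁻¹ := ⟨_, rfl⟩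
    rw [← hr] at hdis
    have hσ : σ = r * c := by rw [hr]; group
    have hra : r a = a := by
      rw [hσ, mul_apply, hca] at ha
      exact ha
    have hrb : r b = b := (hdis b).resolve_right hcb
    have hdis' : Disjoint (swap a b * c) r := by
      intro x
      by_cases hxa : x = a
      · right; rw [hxa, hra]
      by_cases hxb : x = b
      · right; rw [hxb, hrb]
      refine (hdis x).symm.imp_left fun h => ?_
      rw [mul_apply, h, swap_apply_of_ne_of_ne hxa hxb]
    have hf : (Finset.univ.filter fun x => (swap a b * σ) x = x) =
        (Finset.univ.filter fun x => σ x = x).erase a := by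
      ext x
      simp only [Finset.mem_filter, Finset.mem_univ, true_and, Finset.mem_erase, mul_apply]
      rw [swap_apply_eq_iff]
      by_cases hxa : x = a
      · subst hxa; simp [ha, hab]
      by_cases hxb : x = b
      · subst hxb
        simp only [swap_apply_right, hb, and_false, iff_false]
        intro h
        exact hab (σ.injective (ha.trans h.symm))
      rw [swap_apply_of_ne_of_ne hxa hxb]
      simp [hxa]
    have h1 := Finset.card_erase_add_one (s := Finset.univ.filter fun x => σ x = x) (a := a)
      (by simp [ha])
    have h2 : swap a b * σ = (swap a b * c) * r := by
      rw [hσ, hdis.commute.eq, mul_assoc]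
    have h3 : (swap a b * σ).cycleType.card = σ.cycleType.card := by
      rw [h2, hdis'.cycleType_mul, hσ, hdis.cycleType_mul, hcyc.cycleType,
        (isCycle_swap_mul hcyc hca hcb).cycleType]
      simp [add_comm]
    rw [hf, h3]
    omega

lemma cycleCount_ofSubtype {V : Type*} [Fintype V] [DecidableEq V] (a : V)
    (τ : Perm {x : V // x ≠ a}) : cycleCount (ofSubtype τ) = cycleCount τ + 1 := by
  unfold cycleCount
  have hf : (Finset.univ.filter fun x => (ofSubtype τ) x = x) =
      insert a ((Finset.univ.filter fun x => τ x = x).map (Function.Embedding.subtype _)) := by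
    ext x
    by_cases hxa : x = a
    · subst hxa
      simp [ofSubtype_apply_of_not_mem]
    · simp [hxa, ofSubtype_apply_of_mem τ hxa, Subtype.ext_iff]
  rw [cycleType_ofSubtype, hf, Finset.card_insert_of_notMem (by simp), Finset.card_map]
  ring

lemma sum_fix {V : Type*} [Fintype V] [DecidableEq V] (a : V) (f : Perm V → ℚ) :
    ∑ σ ∈ Finset.univ.filter (fun σ : Perm V => σ a = a), f σ =
      ∑ τ : Perm {x : V // x ≠ a}, f (ofSubtype τ) := by
  symm
  refine Finset.sum_bij (fun τ _ => ofSubtype τ) ?_ ?_ ?_ ?_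
  · intro τ _
    simp [ofSubtype_apply_of_not_mem]
  · intro τ _ τ' _ h
    exact ofSubtype_injective h
  · intro σ hσ
    have hσ' : σ a = a := by simpa using hσ
    have h1 : ∀ x, σ x ≠ a ↔ x ≠ a := fun x => by
      rw [not_iff_not]
      exact ⟨fun h => σ.injective (h.trans hσ'.symm), fun h => by rw [h, hσ']⟩
    refine ⟨σ.subtypePerm h1, Finset.mem_univ _, ofSubtype_subtypePerm h1 ?_⟩
    rintro x hx rfl
    exact hx hσ'
  · intros; rfl

lemma sum_map_eq {V : Type*} [Fintype V] [DecidableEq V] (a b : V) (f : Perm V → ℚ) :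
    ∑ π ∈ Finset.univ.filter (fun π : Perm V => π a = b), f π =
      ∑ τ : Perm {x : V // x ≠ a}, f (swap a b * ofSubtype τ) := by
  rw [← sum_fix a (fun σ => f (swap a b * σ))]
  refine Finset.sum_nbij' (fun π => swap a b * π) (fun π => swap a b * π) ?_ ?_ ?_ ?_ ?_
  · intro π h
    have : π a = b := by simpa using h
    simp [this]
  · intro π h
    have : π a = a := by simpa using h
    simp [this]
  · intros; simp
  · intros; simp
  · intros; simp

lemma sum_cycleCount_fix {V : Type*} [Fintype V] [DecidableEq V] (a : V) :
    ∑ σ ∈ Finset.univ.filter (fun σ : Perm V => σ a = a), (cycleCount σ : ℚ) =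
      ∑ τ : Perm {x : V // x ≠ a}, ((cycleCount τ : ℚ) + 1) := by
  rw [sum_fix]
  refine Finset.sum_congr rfl fun τ _ => ?_
  rw [cycleCount_ofSubtype]
  push_cast
  rfl

lemma cycleCount_swap_mul_ofSubtype {V : Type*} [Fintype V] [DecidableEq V] {a b : V}
    (hab : a ≠ b) (τ : Perm {x : V // x ≠ a}) :
    cycleCount (swap a b * ofSubtype τ) = cycleCount τ := by
  have h1 := cycleCount_swap_mul (σ := ofSubtype τ) hab
    (ofSubtype_apply_of_not_mem τ (by simp))
  have h2 := cycleCount_ofSubtype a τ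
  omega

lemma sum_cycleCount_map_eq {V : Type*} [Fintype V] [DecidableEq V] {a b : V} (hab : a ≠ b) :
    ∑ π ∈ Finset.univ.filter (fun π : Perm V => π a = b), (cycleCount π : ℚ) =
      ∑ τ : Perm {x : V // x ≠ a}, (cycleCount τ : ℚ) := by
  rw [sum_map_eq]
  exact Finset.sum_congr rfl fun τ _ => by rw [cycleCount_swap_mul_ofSubtype hab]

lemma card_ne {V : Type*} [Fintype V] [DecidableEq V] {n : ℕ} (hV : Fintype.card V = n + 1)
    (a : V) : Fintype.card {x : V // x ≠ a} = n := by
  rw [Fintype.card_subtype_compl, hV]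
  simp

lemma sum_cycleCount (n : ℕ) : ∀ {V : Type*} [Fintype V] [DecidableEq V],
    Fintype.card V = n → ∑ π : Perm V, (cycleCount π : ℚ) = (n.factorial : ℚ) * harm n := by
  induction n with
  | zero =>
    intro V _ _ hV
    have : IsEmpty V := Fintype.card_eq_zero_iff.1 hV
    have h0 : ∀ π : Perm V, cycleCount π = 0 := fun π => by
      simp [cycleCount, Subsingleton.elim π 1]
    simp [h0, harm]
  | succ n ih =>
    intro V _ _ hV
    obtain ⟨a⟩ : Nonempty V := Fintype.card_pos_iff.1 (by omega)
    have hc := card_ne hV a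
    have hb : ∀ b ∈ Finset.univ.erase a,
        ∑ π ∈ Finset.univ.filter (fun π : Perm V => π a = b), (cycleCount π : ℚ) =
          (n.factorial : ℚ) * harm n := fun b hb => by
      rw [sum_cycleCount_map_eq (Finset.ne_of_mem_erase hb).symm, ih hc]
    rw [← Finset.sum_fiberwise Finset.univ (fun π : Perm V => π a),
      ← Finset.add_sum_erase _ _ (Finset.mem_univ a), sum_cycleCount_fix,
      Finset.sum_add_distrib, ih hc, Finset.sum_congr rfl hb]
    simp only [Finset.sum_const, Finset.card_erase_of_mem (Finset.mem_univ a), Finset.card_univ,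
      hV, Fintype.card_perm, hc, nsmul_eq_mul, Nat.factorial_succ, harm, Finset.sum_range_succ]
    have : (n : ℚ) + 1 ≠ 0 := by positivity
    push_cast [Nat.add_sub_cancel]
    field_simp
    ring

/-- If `π = swap a b * σ` with `σ a = a`, then `π` exchanges `a` and `b` exactly when `σ` also
fixes `b`, so the sum is over the permutations of `{x // x ≠ a}` fixing `b`. -/
lemma sum_cycleCount_exchange {V : Type*} [Fintype V] [DecidableEq V] {n : ℕ}
    (hV : Fintype.card V = n + 2) {a b : V} (hab : a ≠ b) :
    ∑ π : Perm V, (if π a = b then (if π b = a then (cycleCount π : ℚ) else 0) else 0) =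
      (n.factorial : ℚ) * (harm n + 1) := by
  have hc := card_ne hV a
  have hc' := card_ne hc ⟨b, hab.symm⟩
  rw [← Finset.sum_filter, sum_map_eq]
  have : ∀ τ : Perm {x : V // x ≠ a},
      (if (swap a b * ofSubtype τ) b = a then (cycleCount (swap a b * ofSubtype τ) : ℚ) else 0) =
      if τ ⟨b, hab.symm⟩ = ⟨b, hab.symm⟩ then (cycleCount τ : ℚ) else 0 := by
    intro τ
    have h : (swap a b * ofSubtype τ) b = a ↔ τ ⟨b, hab.symm⟩ = ⟨b, hab.symm⟩ := by
      rw [mul_apply, swap_apply_eq_iff, swap_apply_left, ofSubtype_apply_of_mem τ hab.symm,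
        Subtype.ext_iff]
    simp only [cycleCount_swap_mul_ofSubtype hab, h]
  rw [Finset.sum_congr rfl fun τ _ => this τ, ← Finset.sum_filter, sum_cycleCount_fix,
    Finset.sum_add_distrib, sum_cycleCount n hc']
  simp only [Finset.sum_const, Finset.card_univ, Fintype.card_perm, hc', nsmul_eq_mul]
  ring

theorem stmt_10 {V : Type*} [Fintype V] [DecidableEq V] (d : ℕ) (hd : 2 ≤ d)
    (hV : Fintype.card V = d) (a b : V) (hab : a ≠ b) :
    ∑ π ∈ Finset.univ.filter fun π : Equiv.Perm V => π a ≠ b ∧ π b ≠ a,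
        (cycleCount π : ℚ) =
      (Nat.factorial d : ℚ) * harm d - 2 * (Nat.factorial (d - 1) : ℚ) * harm (d - 1) +
        (Nat.factorial (d - 2) : ℚ) * (harm (d - 2) + 1) := by
  obtain ⟨n, rfl⟩ : ∃ n, d = n + 2 := ⟨d - 2, by omega⟩
  have h0 := sum_cycleCount (n + 2) hV
  have h1 := sum_cycleCount_map_eq hab
  have h2 := sum_cycleCount_map_eq hab.symm
  rw [sum_cycleCount (n + 1) (card_ne hV _), Finset.sum_filter] at h1 h2
  have h3 := sum_cycleCount_exchange hV hab
  have hie : ∀ π : Perm V, (if π a ≠ b ∧ π b ≠ a then (cycleCount π : ℚ) else 0) =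
      cycleCount π - (if π a = b then (cycleCount π : ℚ) else 0)
        - (if π b = a then (cycleCount π : ℚ) else 0)
        + (if π a = b then (if π b = a then (cycleCount π : ℚ) else 0) else 0) := by
    intro π
    by_cases h : π a = b <;> by_cases h' : π b = a <;> simp [h, h']
  rw [Finset.sum_filter, Finset.sum_congr rfl fun π _ => hie π, Finset.sum_add_distrib,
    Finset.sum_sub_distrib, Finset.sum_sub_distrib, h0, h1, h2, h3,
    show n + 2 - 1 = n + 1 by omega, show n + 2 - 2 = n by omega]
  ring
end
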